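/- Let f̄ : ℝ → ℝ^n be the extension of the (p+1)-points-p-segments curve through P₀, …, P_p ∈ ℝ^n (p ≥ 2), and let φ be an even nonnegative mollifier on ℝ with supp φ = [−1,1]. Then for every ε ∈ (0,1): L(F_ε|_{[0,p]}) ≤ L(f) ≤ L(F̂_ε|_{[0,p]}), where F_ε and F̂_ε are the conventional and directional mollifications of f̄, f is the (p+1)-points-p-segments curve, and L denotes curve length with respect to the Euclidean (ℓ₂) norm. -/

import Mathlib

open MeasureTheory Filter Topology

noncomputable section

abbrev Euc (n : ℕ) := EuclideanSpace ℝ (Fin n)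

/-- The scaled mollifier `φ_ε(x) = ε⁻¹ φ(x/ε)` on `ℝ`. -/
def mollR (ε : ℝ) (φ : ℝ → ℝ) : ℝ → ℝ := fun x => ε⁻¹ * φ (x / ε)

/-- The index `r ∈ {1,…,p}` of the segment containing `t` (clamped, so that the
first and last segments are extended affinely). -/
def segIdx (p : ℕ) (t : ℝ) : ℤ := max 1 (min (p : ℤ) ⌈t⌉)

/-- The extension `f̄` of the `(p+1)`-points-`p`-segments curve through
`P 0, …, P p`: on `[r-1, r]` it is `P_{r-1} + (t-(r-1)) • (P_r - P_{r-1})`,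
extended by the affine formula of the first segment for `t ≤ 0` and of the last
segment for `t ≥ p`. -/
def fbarP {n : ℕ} (p : ℕ) (P : ℕ → Euc n) : ℝ → Euc n :=
  fun t => P (segIdx p t - 1).toNat
    + (t - ((segIdx p t : ℝ) - 1)) • (P (segIdx p t).toNat - P (segIdx p t - 1).toNat)

/-- The (almost everywhere) derivative of `f̄`. -/
def DfbarP {n : ℕ} (p : ℕ) (P : ℕ → Euc n) : ℝ → Euc n :=
  fun t => P (segIdx p t).toNat - P (segIdx p t - 1).toNat

/-- The conventional mollification `F_ε = f̄ * φ_ε` (componentwise). -/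
def FconvP {n : ℕ} (ε : ℝ) (φ : ℝ → ℝ) (p : ℕ) (P : ℕ → Euc n) : ℝ → Euc n :=
  fun t => ∫ s, mollR ε φ (t - s) • fbarP p P s

/-- The directional derivative term `D_ε(t) = ∫ Df̄(s)·(t-s)·φ_ε(t-s) ds`. -/
def DdirP {n : ℕ} (ε : ℝ) (φ : ℝ → ℝ) (p : ℕ) (P : ℕ → Euc n) : ℝ → Euc n :=
  fun t => ∫ s, ((t - s) * mollR ε φ (t - s)) • DfbarP p P s

/-- The directional mollification `F̂_ε = F_ε + D_ε`. -/
def FhatP {n : ℕ} (ε : ℝ) (φ : ℝ → ℝ) (p : ℕ) (P : ℕ → Euc n) : ℝ → Euc n :=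
  fun t => FconvP ε φ p P t + DdirP ε φ p P t

/-!
Minkowski's integral inequality for the variation bounds the length of `k ⋆ f` on `[a, b]` by the
average, with weights `|k u|`, of the lengths of `f` on the translates `[a - u, b - u]`.  The
polygonal curve is affine near both ends of `[0, p]`, hence symmetric about its end points, so its
lengths on `[-u, p - u]` and `[u, p + u]` add up to `2 L(f)`, and for an even kernel of mass one the
average is at most `L(f)`.

For the directional mollification, `F̂_ε(t)` averages the values at `t` of the tangent lines of `f̄`
at the points `s` near `t`.  If `t = r` is a node and `|r - s| < 1`, then this tangent line passes
through `P r`; so `F̂_ε` visits all vertices in order, and a polygonal curve is the shortest one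
doing so.
-/

open scoped ENNReal Convolution
open ContinuousLinearMap (lsmul)

section Variation

theorem eVariationOn_integral_le {α Ω E : Type*} [LinearOrder α] [MeasurableSpace Ω]
    {μ : Measure Ω} [NormedAddCommGroup E] [NormedSpace ℝ E] {F : Ω → α → E} {s : Set α}
    (hF : ∀ t ∈ s, Integrable (F · t) μ) :
    eVariationOn (fun t => ∫ ω, F ω t ∂μ) s ≤ ∫⁻ ω, eVariationOn (F ω) s ∂μ := by
  refine iSup_le fun ⟨N, t, ht, hts⟩ => ?_
  calc ∑ i ∈ Finset.range N, edist (∫ ω, F ω (t (i + 1)) ∂μ) (∫ ω, F ω (t i) ∂μ)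
      ≤ ∑ i ∈ Finset.range N, ∫⁻ ω, edist (F ω (t (i + 1))) (F ω (t i)) ∂μ :=
        Finset.sum_le_sum fun i _ =>
          edist_integral_le_lintegral_edist (hF _ (hts (i + 1))) (hF _ (hts i))
    _ = ∫⁻ ω, ∑ i ∈ Finset.range N, edist (F ω (t (i + 1))) (F ω (t i)) ∂μ :=
        (lintegral_finsetSum' _ fun i _ => ((hF _ (hts (i + 1))).aestronglyMeasurable.edist
          (hF _ (hts i)).aestronglyMeasurable)).symm
    _ ≤ ∫⁻ ω, eVariationOn (F ω) s ∂μ :=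
        lintegral_mono fun ω => eVariationOn.sum_le ht hts

variable {E : Type*} [PseudoEMetricSpace E]

theorem eVariationOn_comp_sub_const_Icc (f : ℝ → E) (a b u : ℝ) :
    eVariationOn (fun t => f (t - u)) (Set.Icc a b) =
      eVariationOn f (Set.Icc (a - u) (b - u)) := by
  rw [← Set.image_sub_const_Icc]
  exact eVariationOn.comp_eq_of_monotoneOn f (· - u) fun _ _ _ _ h => sub_le_sub_right h u

theorem eVariationOn_comp_const_sub_Icc (f : ℝ → E) (a b c : ℝ) :
    eVariationOn (fun t => f (c - t)) (Set.Icc a b) =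
      eVariationOn f (Set.Icc (c - b) (c - a)) := by
  rw [← Set.image_const_sub_Icc]
  exact eVariationOn.comp_eq_of_antitoneOn f (c - ·) fun _ _ _ _ h => sub_le_sub_left h c

theorem eVariationOn_Icc_add_Icc (f : ℝ → E) {a b c : ℝ} (hab : a ≤ b) (hbc : b ≤ c) :
    eVariationOn f (Set.Icc a b) + eVariationOn f (Set.Icc b c) =
      eVariationOn f (Set.Icc a c) := by
  simpa only [Set.univ_inter] using eVariationOn.Icc_add_Icc f hab hbc (Set.mem_univ b)

theorem eVariationOn_Icc_natCast_le {f g : ℝ → E} {p : ℕ}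
    (h : ∀ i < p, eVariationOn f (Set.Icc (i : ℝ) (i + 1)) ≤
      eVariationOn g (Set.Icc (i : ℝ) (i + 1))) :
    eVariationOn f (Set.Icc 0 (p : ℝ)) ≤ eVariationOn g (Set.Icc 0 (p : ℝ)) := by
  have sum_eq (F : ℝ → E) := eVariationOn.sum' F (Nat.mono_cast (α := ℝ)) (n := p)
  simp only [Nat.cast_add, Nat.cast_one, Nat.cast_zero] at sum_eq
  rw [← sum_eq f, ← sum_eq g]
  exact Finset.sum_le_sum fun i hi => h i (Finset.mem_range.1 hi)

end Variation

section Affine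

variable {E : Type*} [SeminormedAddCommGroup E] [NormedSpace ℝ E]

theorem eVariationOn_lineMap_Icc_le (x y : E) (a b : ℝ) :
    eVariationOn (AffineMap.lineMap x y : ℝ → E) (Set.Icc a b) ≤
      edist x y * ENNReal.ofReal (b - a) := by
  have := (lipschitzWith_lineMap (𝕜 := ℝ) x y).lipschitzOnWith.comp_eVariationOn_le
    (Set.mapsTo_univ id (Set.Icc a b))
  rwa [eVariationOn_id_Icc, ← edist_nndist] at this

end Affine

section Symmetric

variable {E : Type*} [SeminormedAddCommGroup E]

/-- The part of the graph of `f` over the open interval of radius `δ` about `a` is symmetric under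
the point reflection in `(a, f a)`.  This is what is needed of a curve at an end point in order to
compare its lengths on opposite translates of an interval. -/
def SymmetricAbout (f : ℝ → E) (a δ : ℝ) : Prop :=
  ∀ u, |u| < δ → f (a + u) - f a = f a - f (a - u)

theorem SymmetricAbout.eVariationOn_Icc_sub {f : ℝ → E} {a δ u : ℝ} (hf : SymmetricAbout f a δ)
    (hu : u < δ) :
    eVariationOn f (Set.Icc (a - u) a) = eVariationOn f (Set.Icc a (a + u)) := by
  have reflect : Set.EqOn f (fun t => f a + f a - f (a + a - t)) (Set.Icc (a - u) a) := by
    rintro t ⟨hat, hta⟩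
    have := hf (t - a) (abs_lt.2 ⟨by linarith, by linarith⟩)
    rwa [add_sub_cancel, sub_sub_eq_add_sub, sub_eq_sub_iff_add_eq_add, ← eq_sub_iff_add_eq] at this
  calc eVariationOn f (Set.Icc (a - u) a)
      = eVariationOn (fun t => f a + f a - f (a + a - t)) (Set.Icc (a - u) a) :=
        eVariationOn.congr reflect
    _ = eVariationOn (fun t => f (a + a - t)) (Set.Icc (a - u) a) := by
        simp only [eVariationOn, edist_sub_left]
    _ = eVariationOn f (Set.Icc a (a + u)) := by
        rw [eVariationOn_comp_const_sub_Icc]; congr 2 <;> ring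

theorem eVariationOn_Icc_translate_add {f : ℝ → E} {a b δ u : ℝ} (ha : SymmetricAbout f a δ)
    (hb : SymmetricAbout f b δ) (hδ : δ ≤ b - a) (hu : |u| < δ) :
    eVariationOn f (Set.Icc (a - u) (b - u)) + eVariationOn f (Set.Icc (a + u) (b + u)) =
      2 * eVariationOn f (Set.Icc a b) := by
  wlog hu0 : 0 ≤ u generalizing u
  · simpa [add_comm, ← sub_eq_add_neg] using this (u := -u) (by rwa [abs_neg]) (by linarith)
  rw [abs_of_nonneg hu0] at hu
  calc eVariationOn f (Set.Icc (a - u) (b - u)) + eVariationOn f (Set.Icc (a + u) (b + u))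
      = eVariationOn f (Set.Icc (a - u) a) + eVariationOn f (Set.Icc a (b - u)) +
          (eVariationOn f (Set.Icc (a + u) b) + eVariationOn f (Set.Icc b (b + u))) := by
        rw [eVariationOn_Icc_add_Icc f (by linarith) (by linarith),
          eVariationOn_Icc_add_Icc f (by linarith) (by linarith)]
    _ = (eVariationOn f (Set.Icc a (a + u)) + eVariationOn f (Set.Icc (a + u) b)) +
          (eVariationOn f (Set.Icc a (b - u)) + eVariationOn f (Set.Icc (b - u) b)) := by
        rw [ha.eVariationOn_Icc_sub hu, hb.eVariationOn_Icc_sub hu]; ring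
    _ = 2 * eVariationOn f (Set.Icc a b) := by
        rw [eVariationOn_Icc_add_Icc f (by linarith) (by linarith),
          eVariationOn_Icc_add_Icc f (by linarith) (by linarith), two_mul]

end Symmetric

section Convolution

theorem lintegral_mul_le_of_even {G : Type*} [MeasurableSpace G] [InvolutiveNeg G]
    [MeasurableNeg G] {μ : Measure G} [μ.IsNegInvariant] {k V : G → ℝ≥0∞} {c : ℝ≥0∞}
    (hk : AEMeasurable k μ) (hk_even : ∀ u, k (-u) = k u)
    (hV : ∀ u, k u ≠ 0 → V u + V (-u) ≤ 2 * c) :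
    ∫⁻ u, k u * V u ∂μ ≤ (∫⁻ u, k u ∂μ) * c := by
  have reflect : ∫⁻ u, k u * V (-u) ∂μ = ∫⁻ u, k u * V u ∂μ := by
    rw [← lintegral_neg_eq_self]
    simp only [hk_even, neg_neg]
  have pointwise (u : G) : k u * V u + k u * V (-u) ≤ k u * (2 * c) := by
    rw [← mul_add]
    rcases eq_or_ne (k u) 0 with h | h
    · simp only [h, zero_mul, le_refl]
    · exact mul_le_mul_right (hV u h) _
  refine (ENNReal.mul_le_mul_iff_right two_ne_zero ENNReal.ofNat_ne_top).1 ?_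
  calc 2 * ∫⁻ u, k u * V u ∂μ
      = ∫⁻ u, k u * V u ∂μ + ∫⁻ u, k u * V (-u) ∂μ := by rw [reflect, two_mul]
    _ ≤ ∫⁻ u, k u * V u + k u * V (-u) ∂μ := le_lintegral_add _ _
    _ ≤ ∫⁻ u, k u * (2 * c) ∂μ := lintegral_mono pointwise
    _ = 2 * ((∫⁻ u, k u ∂μ) * c) := by
        rw [lintegral_mul_const'' _ hk, mul_left_comm]

variable {E : Type*} [NormedAddCommGroup E] [NormedSpace ℝ E] {k : ℝ → ℝ} {f : ℝ → E}

theorem eVariationOn_convolution_le_lintegral (hkf : ConvolutionExists k f (lsmul ℝ ℝ))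
    (a b : ℝ) :
    eVariationOn (k ⋆[lsmul ℝ ℝ] f) (Set.Icc a b) ≤
      ∫⁻ u, ‖k u‖ₑ * eVariationOn f (Set.Icc (a - u) (b - u)) := by
  refine (eVariationOn_integral_le fun t _ => hkf t).trans (lintegral_mono fun u => ?_)
  rw [← eVariationOn_comp_sub_const_Icc]
  exact (lipschitzWith_smul (k u)).lipschitzOnWith.comp_eVariationOn_le (Set.mapsTo_univ _ _)

theorem eVariationOn_convolution_le {a b δ : ℝ} (hkf : ConvolutionExists k f (lsmul ℝ ℝ))
    (hk : AEStronglyMeasurable k) (hk_even : ∀ u, k (-u) = k u)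
    (hk_supp : Function.support k ⊆ Metric.ball 0 δ) (ha : SymmetricAbout f a δ)
    (hb : SymmetricAbout f b δ) (hδ : δ ≤ b - a) :
    eVariationOn (k ⋆[lsmul ℝ ℝ] f) (Set.Icc a b) ≤
      (∫⁻ u, ‖k u‖ₑ) * eVariationOn f (Set.Icc a b) := by
  refine (eVariationOn_convolution_le_lintegral hkf a b).trans
    (lintegral_mul_le_of_even hk.enorm (fun u => by rw [hk_even]) fun u hu => ?_)
  have hu : |u| < δ := by simpa using hk_supp (enorm_ne_zero.1 hu)
  simpa only [sub_neg_eq_add] using (eVariationOn_Icc_translate_add ha hb hδ hu).le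

end Convolution

section Polygon

variable {n p i r : ℕ} {P : ℕ → Euc n} {s : ℝ}

theorem segIdx_of_mem_Ioc (hi : i < p) (hs : s ∈ Set.Ioc (i : ℝ) (i + 1)) :
    segIdx p s = i + 1 := by
  have : ⌈s⌉ = (i : ℤ) + 1 := Int.ceil_eq_iff.2 (by push_cast; simpa using hs)
  unfold segIdx
  omega

theorem segIdx_of_le_one (hs : s ≤ 1) : segIdx p s = 1 := by
  have : ⌈s⌉ ≤ 1 := Int.ceil_le.2 (mod_cast hs)
  unfold segIdx
  omega

theorem segIdx_of_sub_one_lt (hp : 1 ≤ p) (hs : (p : ℝ) - 1 < s) : segIdx p s = p := by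
  have : (p : ℤ) - 1 < ⌈s⌉ := Int.lt_ceil.2 (mod_cast hs)
  unfold segIdx
  omega

theorem segIdx_eq_or_eq_add_one (hr : r ≤ p) (hs : |r - s| < 1) :
    segIdx p s = r ∨ segIdx p s = r + 1 := by
  obtain ⟨hsr, hrs⟩ := abs_lt.1 hs
  have : (r : ℤ) - 1 < ⌈s⌉ := Int.lt_ceil.2 (by push_cast; linarith)
  have : ⌈s⌉ ≤ (r : ℤ) + 1 := Int.ceil_le.2 (by push_cast; linarith)
  unfold segIdx
  omega

theorem fbarP_add_smul_DfbarP (hr : r ≤ p) (hs : |r - s| < 1) :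
    fbarP p P s + (r - s) • DfbarP p P s = P r := by
  unfold fbarP DfbarP
  rcases segIdx_eq_or_eq_add_one hr hs with h | h <;> rw [h, add_assoc, ← add_smul]
  · have : s - (((r : ℤ) : ℝ) - 1) + (r - s) = 1 := by push_cast; ring
    rw [this, one_smul, add_sub_cancel, Int.toNat_natCast]
  · have : s - (((r + 1 : ℤ) : ℝ) - 1) + (r - s) = 0 := by push_cast; ring
    rw [this, zero_smul, add_zero, add_sub_cancel_right, Int.toNat_natCast]

theorem fbarP_natCast (hr : r ≤ p) : fbarP p P r = P r := by
  simpa using fbarP_add_smul_DfbarP (P := P) (s := r) hr (by simp)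

theorem fbarP_eqOn_lineMap (hi : i < p) :
    Set.EqOn (fbarP p P) (fun t => AffineMap.lineMap (P i) (P (i + 1)) (t - i))
      (Set.Icc (i : ℝ) (i + 1)) := by
  intro t ht
  rcases ht.1.eq_or_lt with rfl | hit
  · simp [fbarP_natCast hi.le]
  · have key := segIdx_of_mem_Ioc hi ⟨hit, ht.2⟩
    have succ : ((i : ℤ) + 1).toNat = i + 1 := by omega
    simp [fbarP, key, succ, AffineMap.lineMap_apply, add_comm]

theorem eVariationOn_fbarP_segment_le (hi : i < p) :
    eVariationOn (fbarP p P) (Set.Icc (i : ℝ) (i + 1)) ≤ edist (P i) (P (i + 1)) := by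
  rw [eVariationOn.congr (fbarP_eqOn_lineMap hi), eVariationOn_comp_sub_const_Icc]
  simpa using eVariationOn_lineMap_Icc_le (P i) (P (i + 1)) (i - i) (i + 1 - i)

theorem eVariationOn_fbarP_le {g : ℝ → Euc n} (hg : ∀ r ≤ p, g r = P r) :
    eVariationOn (fbarP p P) (Set.Icc 0 (p : ℝ)) ≤ eVariationOn g (Set.Icc 0 (p : ℝ)) := by
  refine eVariationOn_Icc_natCast_le fun i hi => (eVariationOn_fbarP_segment_le hi).trans ?_
  rw [← hg i hi.le, ← hg (i + 1) hi, Nat.cast_succ]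
  exact eVariationOn.edist_le g (Set.left_mem_Icc.2 (by simp)) (Set.right_mem_Icc.2 (by simp))

theorem symmetricAbout_fbarP (hr : r ≤ p)
    (hD : ∀ u : ℝ, |u| < 1 → DfbarP p P (r + u) = DfbarP p P (r - u)) :
    SymmetricAbout (fbarP p P) r 1 := by
  intro u hu
  have right := fbarP_add_smul_DfbarP (P := P) (s := r + u) hr (by simpa using hu)
  have left := fbarP_add_smul_DfbarP (P := P) (s := r - u) hr (by simpa using hu)
  rw [sub_add_cancel_left, neg_smul] at right
  rw [sub_sub_cancel, ← hD u hu] at left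
  rw [fbarP_natCast hr]
  nth_rw 1 [← right]
  rw [← left]
  abel

theorem symmetricAbout_fbarP_zero : SymmetricAbout (fbarP p P) 0 1 := by
  have (u : ℝ) (hu : |u| < 1) : DfbarP p P (0 + u) = DfbarP p P (0 - u) := by
    have := abs_lt.1 hu
    simp only [DfbarP, segIdx_of_le_one (p := p) (show 0 + u ≤ 1 by linarith),
      segIdx_of_le_one (p := p) (show 0 - u ≤ 1 by linarith)]
  simpa using symmetricAbout_fbarP (r := 0) p.zero_le (by simpa using this)

theorem symmetricAbout_fbarP_last (hp : 1 ≤ p) : SymmetricAbout (fbarP p P) p 1 := by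
  refine symmetricAbout_fbarP le_rfl fun u hu => ?_
  have := abs_lt.1 hu
  simp only [DfbarP, segIdx_of_sub_one_lt hp (show (p : ℝ) - 1 < p + u by linarith),
    segIdx_of_sub_one_lt hp (show (p : ℝ) - 1 < p - u by linarith)]

theorem segIdx_succ (hp : 1 ≤ p) (s : ℝ) :
    segIdx (p + 1) s = if s ≤ p then segIdx p s else (p : ℤ) + 1 := by
  unfold segIdx
  split_ifs with h
  · have : ⌈s⌉ ≤ (p : ℤ) := Int.ceil_le.2 (mod_cast h)
    omega
  · have : (p : ℤ) < ⌈s⌉ := Int.lt_ceil.2 (mod_cast not_le.1 h)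
    omega

theorem continuous_fbarP (hp : 1 ≤ p) : Continuous (fbarP p P) := by
  induction p, hp using Nat.le_induction with
  | base =>
    have (s : ℝ) : segIdx 1 s = 1 := by unfold segIdx; omega
    unfold fbarP
    simp only [this]
    fun_prop
  | succ p hp ih =>
    have glue : fbarP (p + 1) P =
        fun s : ℝ => if s ≤ p then fbarP p P s else P p + (s - p) • (P (p + 1) - P p) := by
      funext s
      have succ : ((p : ℤ) + 1).toNat = p + 1 := by omega
      simp only [fbarP, segIdx_succ hp]
      split_ifs <;> simp [succ]
    rw [glue]
    refine ih.if_le (by fun_prop) continuous_id continuous_const fun s hs => ?_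
    rw [hs, fbarP_natCast le_rfl, sub_self, zero_smul, add_zero]

end Polygon

section Mollification

variable {n p r : ℕ} {P : ℕ → Euc n} {ε : ℝ} {φ : ℝ → ℝ}

theorem integral_mollR (hε : 0 < ε) : ∫ x, mollR ε φ x = ∫ x, φ x := by
  simp only [mollR]
  rw [integral_const_mul, Measure.integral_comp_div, abs_of_pos hε, smul_eq_mul,
    inv_mul_cancel_left₀ hε.ne']

theorem support_mollR_subset_ball (hε : ε ∈ Set.Ioo (0 : ℝ) 1)
    (hφ : Function.support φ ⊆ Set.Icc (-1) 1) :
    Function.support (mollR ε φ) ⊆ Metric.ball 0 1 := by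
  intro x hx
  have : |x / ε| ≤ 1 := abs_le.2 (hφ (right_ne_zero_of_mul hx))
  rw [abs_div, abs_of_pos hε.1, div_le_one hε.1] at this
  simpa using this.trans_lt hε.2

theorem FconvP_eq_convolution : FconvP ε φ p P = mollR ε φ ⋆[lsmul ℝ ℝ] fbarP p P :=
  funext fun _ => convolution_lsmul_swap.symm

theorem convolutionExists_mollR_fbarP (hp : 1 ≤ p) (hint : Integrable (mollR ε φ))
    (hsupp : Function.support (mollR ε φ) ⊆ Metric.ball 0 1) :
    ConvolutionExists (mollR ε φ) (fbarP p P) (lsmul ℝ ℝ) :=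
  (HasCompactSupport.of_support_subset_isCompact (isCompact_closedBall 0 1)
    (hsupp.trans Metric.ball_subset_closedBall)).convolutionExists_left_of_continuous_right _
      hint.locallyIntegrable (continuous_fbarP hp)

theorem eVariationOn_FconvP_le (hp : 1 ≤ p) (hint : Integrable (mollR ε φ))
    (heven : ∀ x, φ (-x) = φ x) (hsupp : Function.support (mollR ε φ) ⊆ Metric.ball 0 1) :
    eVariationOn (FconvP ε φ p P) (Set.Icc 0 (p : ℝ)) ≤
      (∫⁻ x, ‖mollR ε φ x‖ₑ) * eVariationOn (fbarP p P) (Set.Icc 0 (p : ℝ)) := by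
  have mollR_even (x : ℝ) : mollR ε φ (-x) = mollR ε φ x := by
    simp only [mollR, neg_div, heven]
  rw [FconvP_eq_convolution]
  exact eVariationOn_convolution_le (convolutionExists_mollR_fbarP hp hint hsupp)
    hint.aestronglyMeasurable mollR_even hsupp symmetricAbout_fbarP_zero
    (symmetricAbout_fbarP_last hp) (by simpa using hp)

theorem DdirP_natCast (hp : 1 ≤ p) (hr : r ≤ p) (hint : ∫ x, mollR ε φ x = 1)
    (hsupp : Function.support (mollR ε φ) ⊆ Metric.ball 0 1) :
    DdirP ε φ p P r = P r - FconvP ε φ p P r := by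
  have tangent (s : ℝ) : (((r : ℝ) - s) * mollR ε φ (r - s)) • DfbarP p P s =
      mollR ε φ (r - s) • P r - mollR ε φ (r - s) • fbarP p P s := by
    by_cases h : mollR ε φ (r - s) = 0
    · simp only [h, mul_zero, zero_smul, sub_self]
    · have hs : |r - s| < 1 := by simpa using hsupp h
      rw [← smul_sub, ← fbarP_add_smul_DfbarP (P := P) hr hs, add_sub_cancel_left, smul_smul,
        mul_comm]
  have integrable := integrable_of_integral_eq_one hint
  have integrable_fbarP : Integrable fun s => mollR ε φ (r - s) • fbarP p P s :=
    (convolutionExists_mollR_fbarP hp integrable hsupp r).integrable_swap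
  simp only [DdirP, FconvP, tangent]
  rw [integral_sub ((integrable.comp_sub_left _).smul_const _) integrable_fbarP,
    integral_smul_const, integral_sub_left_eq_self (mollR ε φ), hint, one_smul]

theorem FhatP_natCast (hp : 1 ≤ p) (hr : r ≤ p) (hint : ∫ x, mollR ε φ x = 1)
    (hsupp : Function.support (mollR ε φ) ⊆ Metric.ball 0 1) :
    FhatP ε φ p P r = P r := by
  rw [FhatP, DdirP_natCast hp hr hint hsupp, add_sub_cancel]

end Mollification

theorem stmt15_general {n p : ℕ} (hp : 1 ≤ p) (P : ℕ → Euc n) {φ : ℝ → ℝ}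
    (hφ_int : ∫ x, φ x = 1) (hφ_nonneg : ∀ x, 0 ≤ φ x) (hφ_even : ∀ x, φ (-x) = φ x)
    (hφ_supp : Function.support φ ⊆ Set.Icc (-1) 1) {ε : ℝ} (hε : ε ∈ Set.Ioo (0 : ℝ) 1) :
    eVariationOn (FconvP ε φ p P) (Set.Icc 0 (p : ℝ)) ≤
        eVariationOn (fbarP p P) (Set.Icc 0 (p : ℝ)) ∧
      eVariationOn (fbarP p P) (Set.Icc 0 (p : ℝ)) ≤
        eVariationOn (FhatP ε φ p P) (Set.Icc 0 (p : ℝ)) := by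
  have hint : ∫ x, mollR ε φ x = 1 := (integral_mollR hε.1).trans hφ_int
  have hsupp := support_mollR_subset_ball hε hφ_supp
  have integrable := integrable_of_integral_eq_one hint
  have mass : ∫⁻ x, ‖mollR ε φ x‖ₑ = 1 := by
    have nonneg (x : ℝ) : 0 ≤ mollR ε φ x := mul_nonneg (inv_nonneg.2 hε.1.le) (hφ_nonneg _)
    simp only [← ofReal_integral_norm_eq_lintegral_enorm integrable,
      Real.norm_of_nonneg (nonneg _), hint, ENNReal.ofReal_one]
  constructor
  · simpa only [mass, one_mul] using eVariationOn_FconvP_le hp integrable hφ_even hsupp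
  · exact eVariationOn_fbarP_le fun r hr => FhatP_natCast hp hr hint hsupp

theorem stmt15 (n : ℕ) (p : ℕ) (hp : 2 ≤ p) (P : ℕ → Euc n)
    -- `φ` is an even nonnegative mollifier on `ℝ` with support `[-1,1]`
    (φ : ℝ → ℝ) (hφ_smooth : ContDiff ℝ (⊤ : ℕ∞) φ)
    (hφ_int : ∫ x, φ x = 1) (hφ_nonneg : ∀ x, 0 ≤ φ x)
    (hφ_even : ∀ x, φ (-x) = φ x)
    (hφ_supp : tsupport φ = Set.Icc (-1 : ℝ) 1)
    (ε : ℝ) (hε : ε ∈ Set.Ioo (0 : ℝ) 1) :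
    -- `L(F_ε|[0,p]) ≤ L(f) ≤ L(F̂_ε|[0,p])` in the Euclidean norm
    eVariationOn (FconvP ε φ p P) (Set.Icc 0 (p : ℝ))
        ≤ eVariationOn (fbarP p P) (Set.Icc 0 (p : ℝ))
    ∧ eVariationOn (fbarP p P) (Set.Icc 0 (p : ℝ))
        ≤ eVariationOn (FhatP ε φ p P) (Set.Icc 0 (p : ℝ)) := by
  exact stmt15_general (by omega) P hφ_int hφ_nonneg hφ_even
    ((subset_tsupport φ).trans hφ_supp.subset) hε
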